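/- Let F be a finite field of odd cardinality q, let χ be the quadratic character of F, let ψ : F → ℂ be a nontrivial additive character, let ε ∈ F be a nonsquare and v ∈ F nonzero. For c ∈ F nonzero and s ∈ {1, −1} let S(c, s) = {(x, y) ∈ F² : x·y = c and χ(x) = s}. Consider the alternating combination T(f) = Σ_{S(v²,χ(v))} f − Σ_{S(v²,χ(εv))} f + Σ_{S(εv²,χ(v))} f − Σ_{S(εv²,χ(εv))} f, where each sum is of f(x, y) over the indicated set. Then: (i) for every a ∈ F, T((x,y) ↦ ψ(y·a)) = 0; and (ii) for every b ∈ F, T((x,y) ↦ ψ(x·b)) = 2·χ(v)·χ(b)·Σ_{t ∈ F} χ(t)·ψ(t). (This is equation (eqn:hatvarphi01) of the paper for the function φ₍₀₎, in raw exponential-sum form.) -/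

import Mathlib

open Finset

/-- The alternating combination `T(f) = Σ_{S(v²,χ(v))} f − Σ_{S(v²,χ(εv))} f
+ Σ_{S(εv²,χ(v))} f − Σ_{S(εv²,χ(εv))} f`, where
`S(c,s) = {(x,y) ∈ F² : x·y = c ∧ χ(x) = s}`. -/
noncomputable def Tsum0 {F : Type*} [Field F] [Fintype F] [DecidableEq F]
    (χ : F → ℤ) (ε v : F) (f : F → F → ℂ) : ℂ :=
    (∑ t ∈ univ.filter (fun t : F × F => t.1 * t.2 = v ^ 2 ∧ χ t.1 = χ v), f t.1 t.2)
  - (∑ t ∈ univ.filter (fun t : F × F => t.1 * t.2 = v ^ 2 ∧ χ t.1 = χ (ε * v)), f t.1 t.2)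
  + (∑ t ∈ univ.filter (fun t : F × F => t.1 * t.2 = ε * v ^ 2 ∧ χ t.1 = χ v), f t.1 t.2)
  - (∑ t ∈ univ.filter (fun t : F × F => t.1 * t.2 = ε * v ^ 2 ∧ χ t.1 = χ (ε * v)), f t.1 t.2)

/-!
For fixed `c`, the difference of the sums over `S(c, χ v)` and `S(c, -χ v)` is `χ v` times the
twisted sum `∑ χ x f(x, c / x)`. If `f` depends on `x` only, the twisted sums for `c = v²` and
`c = εv²` coincide. If `f` depends on `y` only, the substitution `x ↦ c / x` extracts the factor
`χ c` from the twisted sum, and the two cancel because `χ (εv²) = -χ (v²)`.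
-/

section MulChar

variable {G R M : Type*} [CommGroupWithZero G] [Fintype G] [CommRing R] [IsDomain R]
  [AddCommGroup M] [Module R M]

theorem sum_mulChar_smul_comp_mul_right {χ : MulChar G R} (hχ : χ ≠ 1) (b : G) (g : G → M) :
    ∑ x, χ x • g (x * b) = χ⁻¹ b • ∑ x, χ x • g x := by
  rcases eq_or_ne b 0 with rfl | hb
  · simp only [mul_zero, ← sum_smul, MulChar.sum_eq_zero_of_ne_one hχ, zero_smul,
      MulChar.map_zero]
  · rw [smul_sum]
    refine Fintype.sum_equiv (Equiv.mulRight₀ b hb) _ _ fun x ↦ ?_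
    change χ x • g (x * b) = χ⁻¹ b • χ (x * b) • g (x * b)
    rw [smul_smul, MulChar.inv_apply', ← map_mul, mul_comm b⁻¹, mul_inv_cancel_right₀ hb]

theorem sum_mulChar_smul_comp_div {χ : MulChar G R} (hχ : χ ≠ 1) (c : G) (g : G → M) :
    ∑ x, χ x • g (c / x) = χ c • ∑ x, χ⁻¹ x • g x :=
  calc ∑ x, χ x • g (c / x)
    _ = ∑ x, χ⁻¹ x • g (x * c) := by
      refine Fintype.sum_equiv (Equiv.inv G) _ _ fun x ↦ ?_
      rw [Equiv.inv_apply, MulChar.inv_apply', inv_inv, div_eq_inv_mul]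
    _ = χ c • ∑ x, χ⁻¹ x • g x := by
      rw [sum_mulChar_smul_comp_mul_right (inv_ne_one.mpr hχ), inv_inv]

end MulChar

theorem sum_filter_mul_eq {G M : Type*} [GroupWithZero G] [Fintype G] [DecidableEq G]
    [AddCommMonoid M] (c : G) {g : G → G → M} (hg : ∀ y, g 0 y = 0) :
    ∑ t : G × G with t.1 * t.2 = c, g t.1 t.2 = ∑ x, g x (x⁻¹ * c) := by
  rw [sum_filter, Fintype.sum_prod_type]
  refine Fintype.sum_congr _ _ fun x ↦ ?_
  rcases eq_or_ne x 0 with rfl | hx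
  · simp only [hg, ite_self, sum_const_zero]
  · simp only [← eq_inv_mul_iff_mul_eq₀ hx, sum_ite_eq', mem_univ, if_true]

theorem sum_filter_eq_sub_sum_filter_eq_neg {ι M : Type*} [AddCommGroup M] {χ : ι → ℤ}
    (hχ : ∀ i, χ i = 0 ∨ χ i = 1 ∨ χ i = -1) (j : ι) (s : Finset ι) (f : ι → M) :
    ∑ i ∈ s with χ i = χ j, f i - ∑ i ∈ s with χ i = -χ j, f i =
      χ j • ∑ i ∈ s, χ i • f i := by
  rw [sum_filter, sum_filter, ← sum_sub_distrib, smul_sum]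
  refine sum_congr rfl fun i _ ↦ ?_
  rcases hχ i with hi | hi | hi <;> rcases hχ j with hj | hj | hj <;> simp [hi, hj]

section QuadraticChar

variable {F : Type*} [Field F] [Fintype F] [DecidableEq F]

theorem eq_quadraticChar {χ : F → ℤ} (h_zero : χ 0 = 0)
    (h_square : ∀ x, x ≠ 0 → IsSquare x → χ x = 1) (h_nonsquare : ∀ x, ¬ IsSquare x → χ x = -1) :
    χ = quadraticChar F := by
  ext x
  rw [quadraticChar_apply, quadraticCharFun]
  split_ifs with hx hx_square
  · rw [hx, h_zero]
  · exact h_square x hx hx_square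
  · exact h_nonsquare x hx_square

theorem quadraticChar_mul_of_not_isSquare {ε : F} (hε : ¬ IsSquare ε) (x : F) :
    quadraticChar F (ε * x) = -quadraticChar F x := by
  rw [map_mul, quadraticChar_neg_one_iff_not_isSquare.mpr hε, neg_one_mul]

theorem quadraticChar_ne_one_of_not_isSquare {ε : F} (hε : ¬ IsSquare ε) :
    quadraticChar F ≠ 1 :=
  quadraticChar_ne_one fun h ↦ hε (FiniteField.isSquare_of_char_two h ε)

theorem sum_quadraticChar_fiber_sub {M : Type*} [AddCommGroup M] (c v : F) (f : F → F → M) :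
    ∑ t : F × F with t.1 * t.2 = c ∧ quadraticChar F t.1 = quadraticChar F v, f t.1 t.2 -
        ∑ t : F × F with t.1 * t.2 = c ∧ quadraticChar F t.1 = -quadraticChar F v, f t.1 t.2 =
      quadraticChar F v • ∑ x, quadraticChar F x • f x (c / x) := by
  rw [← filter_filter, ← filter_filter]
  have h := sum_filter_eq_sub_sum_filter_eq_neg (χ := fun t : F × F ↦ quadraticChar F t.1)
    (fun t ↦ quadraticChar_isQuadratic F t.1) (v, 0) (univ.filter fun t ↦ t.1 * t.2 = c)
    (fun t ↦ f t.1 t.2)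
  rw [h, sum_filter_mul_eq c (g := fun x y ↦ quadraticChar F x • f x y) (by simp)]
  simp only [div_eq_inv_mul]

theorem Tsum0_quadraticChar {ε : F} (hε : ¬ IsSquare ε) (v : F) (f : F → F → ℂ) :
    Tsum0 (quadraticChar F) ε v f = quadraticChar F v •
      (∑ x, quadraticChar F x • f x (v ^ 2 / x) +
        ∑ x, quadraticChar F x • f x (ε * v ^ 2 / x)) := by
  rw [Tsum0, quadraticChar_mul_of_not_isSquare hε, add_sub_assoc, sum_quadraticChar_fiber_sub,
    sum_quadraticChar_fiber_sub, smul_add]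

theorem Tsum0_quadraticChar_snd {ε : F} (hε : ¬ IsSquare ε) (v : F) (g : F → ℂ) :
    Tsum0 (quadraticChar F) ε v (fun _ y ↦ g y) = 0 := by
  have hχ := quadraticChar_ne_one_of_not_isSquare hε
  rw [Tsum0_quadraticChar hε, sum_mulChar_smul_comp_div hχ, sum_mulChar_smul_comp_div hχ,
    quadraticChar_mul_of_not_isSquare hε, neg_smul, add_neg_cancel, smul_zero]

theorem Tsum0_quadraticChar_fst {ε : F} (hε : ¬ IsSquare ε) (v : F) (g : F → ℂ) :
    Tsum0 (quadraticChar F) ε v (fun x _ ↦ g x) =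
      2 * quadraticChar F v * ∑ x, quadraticChar F x * g x := by
  simp only [Tsum0_quadraticChar hε, zsmul_eq_mul]
  ring

theorem stmt13_general {ε : F} (hε : ¬ IsSquare ε) (v : F) (ψ : F → ℂ) :
    (∀ a : F, Tsum0 (quadraticChar F) ε v (fun _ y ↦ ψ (y * a)) = 0) ∧
    (∀ b : F, Tsum0 (quadraticChar F) ε v (fun x _ ↦ ψ (x * b)) =
      2 * (quadraticChar F v : ℂ) * (quadraticChar F b : ℂ) *
        ∑ t : F, (quadraticChar F t : ℂ) * ψ t) := by
  refine ⟨fun a ↦ Tsum0_quadraticChar_snd hε v fun y ↦ ψ (y * a), fun b ↦ ?_⟩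
  have h_twist : ∑ x, (quadraticChar F x : ℂ) * ψ (x * b) =
      quadraticChar F b * ∑ t, (quadraticChar F t : ℂ) * ψ t := by
    simpa only [zsmul_eq_mul, (quadraticChar_isQuadratic F).inv] using
      sum_mulChar_smul_comp_mul_right (quadraticChar_ne_one_of_not_isSquare hε) b ψ
  rw [Tsum0_quadraticChar_fst hε v fun x ↦ ψ (x * b), h_twist, ← mul_assoc]

end QuadraticChar

/-- Equation (eqn:hatvarphi01) of the paper for `φ₍₀₎`, in raw exponential-sum form:
(i) `T((x,y) ↦ ψ(y·a)) = 0` for all `a`, and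
(ii) `T((x,y) ↦ ψ(x·b)) = 2·χ(v)·χ(b)·Σ_t χ(t)·ψ(t)` for all `b`. -/
theorem stmt13 (F : Type*) [Field F] [Fintype F] [DecidableEq F]
    (hq : Odd (Fintype.card F))
    (χ : F → ℤ) (hχ0 : χ 0 = 0)
    (hχ1 : ∀ x : F, x ≠ 0 → IsSquare x → χ x = 1)
    (hχ2 : ∀ x : F, ¬ IsSquare x → χ x = -1)
    (ψ : F → ℂ) (hψadd : ∀ x y : F, ψ (x + y) = ψ x * ψ y) (hψ : ∃ x : F, ψ x ≠ 1)
    (ε : F) (hε0 : ε ≠ 0) (hε : ¬ IsSquare ε) (v : F) (hv : v ≠ 0) :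
    (∀ a : F, Tsum0 χ ε v (fun _ y => ψ (y * a)) = 0) ∧
    (∀ b : F, Tsum0 χ ε v (fun x _ => ψ (x * b)) =
      2 * (χ v : ℂ) * (χ b : ℂ) * ∑ t : F, (χ t : ℂ) * ψ t) := by
  obtain rfl := eq_quadraticChar hχ0 hχ1 hχ2
  exact stmt13_general hε v ψ
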